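/- Let (M,E,V) be a path geometry, ξ₀ ∈ Γ(E) a nowhere vanishing section, (∇,Π) the Weyl structure associated to ξ₀, and τ the torsion of ∇. Then τ(V,V) = 0 and τ(TM, ι(Q)) ⊂ H. -/

import Mathlib

/-!
The proof compares components of the first Bianchi identity (`Conn.bianchi`) of `∇`.

Put `J = ι ∘ 𝓛(ξ₀,·)`, an isomorphism `V ≅ ι(Q)`. It is parallel, and `τ(ξ₀,η) = -J η` for
`η ∈ V` (`WeylStructure.torsion_scale`). Involutivity of `V` gives `τ(V,V) ⊂ V`.

* On `(ξ₀,η₁,η₂)` with `ηᵢ ∈ V` the identity reads, modulo `H`, `J τ(η₁,η₂) = 0`. Hence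
  `τ(V,V) = 0` (`WeylStructure.torsion_VV`), and the identity becomes
  `R(ξ₀,η₁)η₂ - R(ξ₀,η₂)η₁ = τ(η₂,J η₁) - τ(η₁,J η₂)`.
* Write `τ(ξ₀,J η) ≡ a(η) ξ₀` modulo `V`. The normalization says that
  `2 τ(η₁,J η₂) ≡ a(η₁) η₂` modulo `E`. On `(ξ₀,η₁,J η₂)` the identity modulo `H` reads
  `J R(ξ₀,η₁)η₂ ≡ -τ(J η₁,J η₂) + ½ a(η₁) J η₂ + a(η₂) J η₁`
  (`WeylStructure.bianchi_EVQ`).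

Antisymmetrizing the second identity in `η₁, η₂` and inserting the first, all terms in `a`
cancel and `2 τ(J η₁,J η₂) ≡ 0` modulo `H` remains (`WeylStructure.q_torsion_JJ`). Together
with `τ(H,ι(Q)) ⊂ H` this gives `τ(TM,ι(Q)) ⊂ H`.
-/

/-!
An algebraic model of the smooth calculus on a smooth manifold `M`:
`C` plays the role of the algebra `C^∞(M,ℝ)` of smooth functions and `X` plays the
role of the `C^∞(M,ℝ)`-module `𝔛(M)` of smooth vector fields, together with the Lie
bracket of vector fields and the derivative of functions along vector fields
(i.e. a Lie–Rinehart algebra over `ℝ`).  Distributions (smooth subbundles of `TM`)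
are modelled as `C`-submodules of `X`, linear connections on `TM` as operators
`X → X → X` with the usual tensoriality and Leibniz properties, and one-forms as
`C`-linear maps `X →ₗ[C] C`.
-/

open scoped TensorProduct

/-- The algebra of smooth functions together with the module of smooth vector
fields on a smooth manifold, with the Lie bracket and directional derivative. -/
structure VFCalc where
  /-- the smooth functions `C^∞(M,ℝ)` -/
  C : Type
  /-- the smooth vector fields `𝔛(M)` -/
  X : Type
  [ringC : CommRing C]
  [algC : Algebra ℝ C]
  [grpX : AddCommGroup X]
  [modX : Module C X]
  /-- the Lie bracket of vector fields -/
  lie : X → X → X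
  /-- the derivative `D ψ f = ψ · f` of a function along a vector field -/
  D : X → C → C
  lie_add_left : ∀ ψ₁ ψ₂ φ, lie (ψ₁ + ψ₂) φ = lie ψ₁ φ + lie ψ₂ φ
  lie_skew : ∀ ψ φ, lie φ ψ = - lie ψ φ
  jacobi : ∀ ψ₁ ψ₂ ψ₃, lie ψ₁ (lie ψ₂ ψ₃) = lie (lie ψ₁ ψ₂) ψ₃ + lie ψ₂ (lie ψ₁ ψ₃)
  lie_smul_right : ∀ (f : C) (ψ φ : X), lie ψ (f • φ) = f • lie ψ φ + (D ψ f) • φ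
  D_add_left : ∀ ψ₁ ψ₂ f, D (ψ₁ + ψ₂) f = D ψ₁ f + D ψ₂ f
  D_smul_left : ∀ (g : C) ψ f, D (g • ψ) f = g * D ψ f
  D_add_right : ∀ ψ f₁ f₂, D ψ (f₁ + f₂) = D ψ f₁ + D ψ f₂
  D_mul_right : ∀ ψ f₁ f₂, D ψ (f₁ * f₂) = f₁ * D ψ f₂ + f₂ * D ψ f₁
  D_algebraMap : ∀ ψ r, D ψ (algebraMap ℝ C r) = 0

attribute [instance] VFCalc.ringC VFCalc.algC VFCalc.grpX VFCalc.modX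

/-- the exterior derivative of a one-form, `dα(ψ,φ) = ψ·α(φ) − φ·α(ψ) − α([ψ,φ])` -/
def VFCalc.dform (P : VFCalc) (α : P.X →ₗ[P.C] P.C) (ψ φ : P.X) : P.C :=
  P.D ψ (α φ) - P.D φ (α ψ) - α (P.lie ψ φ)

/-- A (generalized) path geometry on a manifold `M` of dimension `2n+1`:
distributions `E, V ⊂ TM` (of rank `1` and `n`) with `E ∩ V = 0`, `V` involutive,
such that the Levi bracket induces an isomorphism `E ⊗ V ≅ Q := TM/(E ⊕ V)`. -/
structure PathGeometry extends VFCalc where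
  /-- the rank one distribution `E` -/
  E : Submodule C X
  /-- the rank `n` distribution `V` -/
  V : Submodule C X
  inf_bot : E ⊓ V = ⊥
  involutive : ∀ η₁ ∈ V, ∀ η₂ ∈ V, lie η₁ η₂ ∈ V
  /-- the Levi bracket `E ⊗ V → Q = TM/(E ⊔ V)` is an isomorphism of bundles -/
  leviIso : (↥E ⊗[C] ↥V) ≃ₗ[C] (X ⧸ (E ⊔ V))
  leviIso_apply : ∀ (ξ : ↥E) (η : ↥V),
    leviIso (ξ ⊗ₜ[C] η) = Submodule.Quotient.mk (lie (ξ : X) (η : X))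

namespace PathGeometry

variable (P : PathGeometry)

/-- the corank one distribution `H = E ⊕ V` -/
def H : Submodule P.C P.X := P.E ⊔ P.V

/-- the quotient bundle `Q = TM/H` -/
abbrev Q := P.X ⧸ P.H

/-- the quotient projection `q : TM → Q` -/
def q : P.X →ₗ[P.C] P.Q := P.H.mkQ

/-- the Levi bracket `𝓛(ψ,φ) = q([ψ,φ])` -/
def levi (ψ φ : P.X) : P.Q := P.q (P.lie ψ φ)

/-- the constant function `½` -/
noncomputable def half : P.C := algebraMap ℝ P.C (1/2)

/-- A (local) scale: a nowhere vanishing smooth section `ξ₀` of the line bundle `E`,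
i.e. a trivialization of `E`, modelled as a basis of `E` as free rank one module. -/
structure IsScale (ξ₀ : P.X) : Prop where
  mem : ξ₀ ∈ P.E
  span : ∀ ξ ∈ P.E, ∃ f : P.C, ξ = f • ξ₀
  basis : ∀ f : P.C, f • ξ₀ = 0 → f = 0

end PathGeometry

/-- A linear connection on `TM`. -/
structure Conn (P : VFCalc) where
  /-- the covariant derivative `cov ψ φ = ∇_ψ φ` -/
  cov : P.X → P.X → P.X
  add_left : ∀ ψ₁ ψ₂ φ, cov (ψ₁ + ψ₂) φ = cov ψ₁ φ + cov ψ₂ φ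
  smul_left : ∀ (f : P.C) ψ φ, cov (f • ψ) φ = f • cov ψ φ
  add_right : ∀ ψ φ₁ φ₂, cov ψ (φ₁ + φ₂) = cov ψ φ₁ + cov ψ φ₂
  leibniz : ∀ (f : P.C) ψ φ, cov ψ (f • φ) = f • cov ψ φ + (P.D ψ f) • φ

namespace Conn

variable {P : VFCalc} (cn : Conn P)

/-- the torsion `τ(ψ₁,ψ₂) = ∇_{ψ₁}ψ₂ − ∇_{ψ₂}ψ₁ − [ψ₁,ψ₂]` -/
def torsion (ψ₁ ψ₂ : P.X) : P.X := cn.cov ψ₁ ψ₂ - cn.cov ψ₂ ψ₁ - P.lie ψ₁ ψ₂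

/-- the curvature `R(ψ₁,ψ₂)(ψ₃) = ∇_{ψ₁}∇_{ψ₂}ψ₃ − ∇_{ψ₂}∇_{ψ₁}ψ₃ − ∇_{[ψ₁,ψ₂]}ψ₃` -/
def curv (ψ₁ ψ₂ ψ₃ : P.X) : P.X :=
  cn.cov ψ₁ (cn.cov ψ₂ ψ₃) - cn.cov ψ₂ (cn.cov ψ₁ ψ₃) - cn.cov (P.lie ψ₁ ψ₂) ψ₃

end Conn

/-- The Weyl structure associated to a scale `ξ₀`: a linear connection `∇` on `TM`
together with a decomposition `TM = E ⊕ V ⊕ ι(Q)` (encoded by the splitting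
`ι : Q → TM` of `q`) such that `E`, `V`, `ι(Q)` are parallel, `∇ξ₀ = 0`,
`ι ∘ 𝓛 : E ⊗ V → ι(Q)` is parallel, the torsion satisfies `τ(E,V) ⊂ ι(Q)`,
`τ(H,ι(Q)) ⊂ H` and the normalization
`𝓛(τ(ξ₀,ζ₁),η₂) = 2𝓛(ξ₀,τ(η₁,ζ₂))` for `ζᵢ = ι(𝓛(ξ₀,ηᵢ))`. -/
structure WeylStructure (P : PathGeometry) (ξ₀ : P.X) where
  conn : Conn P.toVFCalc
  ι : P.Q →ₗ[P.C] P.X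
  q_ι : ∀ w, P.q (ι w) = w
  parE : ∀ ψ : P.X, ∀ ξ ∈ P.E, conn.cov ψ ξ ∈ P.E
  parV : ∀ ψ : P.X, ∀ η ∈ P.V, conn.cov ψ η ∈ P.V
  parQ : ∀ (ψ : P.X) (w : P.Q), conn.cov ψ (ι w) ∈ LinearMap.range ι
  parScale : ∀ ψ : P.X, conn.cov ψ ξ₀ = 0
  parLevi : ∀ ψ : P.X, ∀ ξ ∈ P.E, ∀ η ∈ P.V,
    conn.cov ψ (ι (P.levi ξ η)) = ι (P.levi (conn.cov ψ ξ) η) + ι (P.levi ξ (conn.cov ψ η))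
  torsEV : ∀ ξ ∈ P.E, ∀ η ∈ P.V, conn.torsion ξ η ∈ LinearMap.range ι
  torsHQ : ∀ ψ ∈ P.H, ∀ w : P.Q, conn.torsion ψ (ι w) ∈ P.H
  norm : ∀ η₁ ∈ P.V, ∀ η₂ ∈ P.V,
    P.levi (conn.torsion ξ₀ (ι (P.levi ξ₀ η₁))) η₂
      = (2 : P.C) • P.levi ξ₀ (conn.torsion η₁ (ι (P.levi ξ₀ η₂)))

/-! ### Vector field calculus -/

namespace VFCalc

variable (P : VFCalc)

lemma lie_add_right (a b c : P.X) : P.lie a (b + c) = P.lie a b + P.lie a c := by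
  rw [P.lie_skew (b + c) a, P.lie_add_left, P.lie_skew a b, P.lie_skew a c]; abel

lemma lie_smul_left (f : P.C) (a b : P.X) :
    P.lie (f • a) b = f • P.lie a b - P.D b f • a := by
  rw [P.lie_skew b, P.lie_smul_right, P.lie_skew a b, smul_neg]; abel

/-- `2` is invertible in the function algebra, so modules over it have no `2`-torsion. -/
lemma eq_zero_of_add_self {N : Type*} [AddCommGroup N] [Module P.C N] {x : N}
    (h : x + x = 0) : x = 0 := by
  have h1 : (algebraMap ℝ P.C (1 / 2)) * 2 = 1 := by
    rw [← map_ofNat (algebraMap ℝ P.C) 2, ← map_mul]; norm_num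
  rw [← one_smul P.C x, ← h1, mul_smul, two_smul, h, smul_zero]

lemma lie_self (a : P.X) : P.lie a a = 0 :=
  P.eq_zero_of_add_self (by nth_rewrite 1 [P.lie_skew a a]; abel)

end VFCalc

/-! ### Torsion, curvature and the first Bianchi identity -/

namespace Conn

variable {P : VFCalc} (cn : Conn P)

lemma zero_right (a : P.X) : cn.cov a 0 = 0 := by
  simpa using cn.add_right a 0 0

lemma neg_right (a b : P.X) : cn.cov a (-b) = -cn.cov a b := by
  rw [eq_neg_iff_add_eq_zero, ← cn.add_right, neg_add_cancel, cn.zero_right]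

lemma sub_right (a b c : P.X) : cn.cov a (b - c) = cn.cov a b - cn.cov a c := by
  rw [sub_eq_add_neg, cn.add_right, cn.neg_right, ← sub_eq_add_neg]

lemma torsion_skew (a b : P.X) : cn.torsion a b = -cn.torsion b a := by
  simp only [torsion]; rw [P.lie_skew b a]; abel

lemma torsion_add_left (a b c : P.X) :
    cn.torsion (a + b) c = cn.torsion a c + cn.torsion b c := by
  simp only [torsion]; rw [P.lie_add_left, cn.add_left, cn.add_right]; abel

lemma torsion_smul_left (f : P.C) (a c : P.X) :
    cn.torsion (f • a) c = f • cn.torsion a c := by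
  simp only [torsion, smul_sub]; rw [P.lie_smul_left, cn.smul_left, cn.leibniz]; abel

/-- The torsion `τ(·,c)` as a `C`-linear map. -/
def torsionLeft (c : P.X) : P.X →ₗ[P.C] P.X where
  toFun a := cn.torsion a c
  map_add' a b := cn.torsion_add_left a b c
  map_smul' f a := cn.torsion_smul_left f a c

lemma torsion_sub_left (a b c : P.X) :
    cn.torsion (a - b) c = cn.torsion a c - cn.torsion b c := (cn.torsionLeft c).map_sub a b

lemma torsion_neg_left (a c : P.X) :
    cn.torsion (-a) c = -cn.torsion a c := (cn.torsionLeft c).map_neg a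

lemma lie_eq (a b : P.X) : P.lie a b = cn.cov a b - cn.cov b a - cn.torsion a b := by
  simp only [torsion]; abel

lemma curv_skew (a b c : P.X) : cn.curv b a c = -cn.curv a b c := by
  have h : cn.cov (-P.lie a b) c = -cn.cov (P.lie a b) c := by
    simpa using cn.smul_left (-1) (P.lie a b) c
  simp only [curv]; rw [P.lie_skew a b, h]; abel

/-- First Bianchi identity for a connection with torsion. Expanding
`[a,b] = ∇_a b - ∇_b a - τ(a,b)` gives the usual form with `∇τ` and `τ ∘ τ`. -/
lemma bianchi (a b c : P.X) :
    cn.curv a b c + cn.curv b c a + cn.curv c a b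
      = cn.cov a (cn.torsion b c) + cn.cov b (cn.torsion c a) + cn.cov c (cn.torsion a b)
        - cn.torsion (P.lie a b) c - cn.torsion (P.lie b c) a
        - cn.torsion (P.lie c a) b := by
  have j : P.lie (P.lie a b) c + P.lie (P.lie b c) a + P.lie (P.lie c a) b = 0 := by
    have h := P.jacobi a b c
    rw [P.lie_skew (P.lie b c) a, P.lie_skew (P.lie a c) b] at h
    have h' : P.lie (P.lie c a) b = -P.lie (P.lie a c) b := by
      rw [← add_eq_zero_iff_eq_neg, ← P.lie_add_left, P.lie_skew a c, neg_add_cancel]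
      simpa using P.lie_add_left 0 0 b
    rw [h', ← sub_eq_zero.mpr h.symm]; abel
  simp only [torsion, curv, cn.sub_right]
  rw [← sub_eq_zero, ← neg_eq_zero, ← j]
  abel

end Conn

/-! ### The Levi bracket in the presence of a scale -/

namespace PathGeometry

variable (P : PathGeometry)

lemma E_le_H : P.E ≤ P.H := le_sup_left

lemma V_le_H : P.V ≤ P.H := le_sup_right

lemma q_eq_zero {a : P.X} : P.q a = 0 ↔ a ∈ P.H := Submodule.Quotient.mk_eq_zero _

lemma levi_add_right (a b c : P.X) : P.levi a (b + c) = P.levi a b + P.levi a c := by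
  simp only [levi, P.lie_add_right, map_add]

lemma levi_add_left (a b c : P.X) : P.levi (a + b) c = P.levi a c + P.levi b c := by
  simp only [levi, P.lie_add_left, map_add]

/-- The Levi bracket is tensorial along `H`, in the second argument. -/
lemma levi_smul_right (f : P.C) (a : P.X) {b : P.X} (hb : b ∈ P.H) :
    P.levi a (f • b) = f • P.levi a b := by
  simp only [levi, P.lie_smul_right, map_add, map_smul, P.q_eq_zero.2 hb, smul_zero, add_zero]

lemma levi_smul_left (f : P.C) {a : P.X} (ha : a ∈ P.H) (b : P.X) :
    P.levi (f • a) b = f • P.levi a b := by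
  simp only [levi, P.lie_smul_left, map_sub, map_smul, P.q_eq_zero.2 ha, smul_zero, sub_zero]

lemma levi_VV {a b : P.X} (ha : a ∈ P.V) (hb : b ∈ P.V) : P.levi a b = 0 :=
  P.q_eq_zero.2 (P.V_le_H (P.involutive a ha b hb))

lemma levi_self (a : P.X) : P.levi a a = 0 := by
  rw [levi, P.lie_self, map_zero]

lemma levi_zero_left (b : P.X) : P.levi 0 b = 0 := by
  simpa using P.levi_add_left 0 0 b

lemma levi_zero_right (a : P.X) : P.levi a 0 = 0 := by
  simpa using P.levi_add_right a 0 0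

lemma levi_neg_right (a b : P.X) : P.levi a (-b) = -P.levi a b := by
  rw [eq_neg_iff_add_eq_zero, ← levi_add_right, neg_add_cancel, levi_zero_right]

lemma levi_sub_right (a b c : P.X) : P.levi a (b - c) = P.levi a b - P.levi a c := by
  rw [sub_eq_add_neg, levi_add_right, levi_neg_right, ← sub_eq_add_neg]

variable {P} {ξ₀ : P.X}

lemma IsScale.mem_H (h : P.IsScale ξ₀) {a : P.X} (ha : a ∈ P.H) :
    ∃ f : P.C, ∃ v ∈ P.V, a = f • ξ₀ + v := by
  obtain ⟨e, he, v, hv, rfl⟩ := Submodule.mem_sup.1 ha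
  obtain ⟨f, rfl⟩ := h.span e he
  exact ⟨f, v, hv, rfl⟩

/-- A scale identifies `E` with the trivial line bundle, so the Levi isomorphism
`E ⊗ V ≅ Q` becomes an isomorphism `𝓛(ξ₀,·) : V ≅ Q`; this is its injectivity. -/
lemma IsScale.levi_injective (h : P.IsScale ξ₀) {v : P.X} (hv : v ∈ P.V)
    (h0 : P.levi ξ₀ v = 0) : v = 0 := by
  let e : P.C ≃ₗ[P.C] P.E :=
    LinearEquiv.ofBijective (LinearMap.toSpanSingleton P.C P.E ⟨ξ₀, h.mem⟩) (by
      constructor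
      · rw [← LinearMap.ker_eq_bot, LinearMap.ker_eq_bot']
        intro f hf
        exact h.basis f (by simpa using congrArg Subtype.val hf)
      · rintro ⟨x, hx⟩
        obtain ⟨f, rfl⟩ := h.span x hx
        exact ⟨f, by ext; simp⟩)
  have he : e 1 = ⟨ξ₀, h.mem⟩ := one_smul P.C _
  have h1 : (⟨ξ₀, h.mem⟩ : P.E) ⊗ₜ[P.C] (⟨v, hv⟩ : P.V) = 0 :=
    P.leviIso.injective (by rw [P.leviIso_apply, map_zero]; exact h0)
  have h2 := congrArg
    ((TensorProduct.congr e (LinearEquiv.refl P.C P.V)).symm ≪≫ₗ TensorProduct.lid P.C P.V) h1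
  rw [← he, map_zero] at h2
  simpa using congrArg Subtype.val h2

/-- Surjectivity of `𝓛(ξ₀,·) : V → Q`. -/
lemma IsScale.levi_surjective (h : P.IsScale ξ₀) (w : P.Q) :
    ∃ v ∈ P.V, P.levi ξ₀ v = w := by
  obtain ⟨t, rfl⟩ := P.leviIso.surjective w
  induction t using TensorProduct.induction_on with
  | zero => exact ⟨0, zero_mem _, (P.levi_zero_right ξ₀).trans (map_zero P.leviIso).symm⟩
  | tmul x y =>
    obtain ⟨f, hf⟩ := h.span x x.2
    refine ⟨f • y, P.V.smul_mem f y.2, ?_⟩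
    rw [P.leviIso_apply, P.levi_smul_right f _ (P.V_le_H y.2),
      ← P.levi_smul_left f (P.E_le_H h.mem), ← hf]
    rfl
  | add x y hx hy =>
    obtain ⟨a, ha, hax⟩ := hx
    obtain ⟨b, hb, hby⟩ := hy
    refine ⟨a + b, add_mem ha hb, ?_⟩
    rw [P.levi_add_right, hax, hby]
    exact (map_add P.leviIso x y).symm

end PathGeometry

/-! ### Torsion components of a Weyl structure -/

namespace WeylStructure

variable {P : PathGeometry} {ξ₀ : P.X} (W : WeylStructure P ξ₀)

/-- The map `J = ι ∘ 𝓛(ξ₀,·)`, which identifies `V` with `ι(Q)`. -/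
def J (v : P.X) : P.X := W.ι (P.levi ξ₀ v)

lemma q_J (v : P.X) : P.q (W.J v) = P.levi ξ₀ v := W.q_ι _

lemma J_sub (a b : P.X) : W.J (a - b) = W.J a - W.J b := by
  rw [J, P.levi_sub_right, map_sub]; rfl

/-- `J` is parallel, since both `ξ₀` and `ι ∘ 𝓛` are. -/
lemma cov_J (h : P.IsScale ξ₀) (a : P.X) {v : P.X} (hv : v ∈ P.V) :
    W.conn.cov a (W.J v) = W.J (W.conn.cov a v) := by
  rw [J, W.parLevi a _ h.mem _ hv, W.parScale, P.levi_zero_left, map_zero, zero_add]; rfl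

/-- The component `τ(E,V) ⊂ ι(Q)` is minus the Levi bracket: modulo `H` the covariant
derivatives drop out. -/
lemma torsion_scale (h : P.IsScale ξ₀) {v : P.X} (hv : v ∈ P.V) :
    W.conn.torsion ξ₀ v = -W.J v := by
  obtain ⟨w, hw⟩ := W.torsEV _ h.mem _ hv
  have h1 := congrArg P.q hw
  rw [W.q_ι, Conn.torsion, W.parScale, sub_zero, map_sub,
    P.q_eq_zero.2 (P.V_le_H (W.parV _ _ hv)), zero_sub] at h1
  rw [← hw, h1, map_neg]; rfl

lemma torsion_VV_mem {a b : P.X} (ha : a ∈ P.V) (hb : b ∈ P.V) :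
    W.conn.torsion a b ∈ P.V :=
  sub_mem (sub_mem (W.parV _ _ hb) (W.parV _ _ ha)) (P.involutive _ ha _ hb)

lemma cov_mem_H (a : P.X) {b : P.X} (hb : b ∈ P.H) : W.conn.cov a b ∈ P.H := by
  obtain ⟨e, he, v, hv, rfl⟩ := Submodule.mem_sup.1 hb
  rw [W.conn.add_right]
  exact add_mem (P.E_le_H (W.parE _ _ he)) (P.V_le_H (W.parV _ _ hv))

lemma curv_scale (a b : P.X) : W.conn.curv a b ξ₀ = 0 := by
  simp [Conn.curv, W.parScale, W.conn.zero_right]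

lemma curv_mem_V (a b : P.X) {v : P.X} (hv : v ∈ P.V) : W.conn.curv a b v ∈ P.V :=
  sub_mem (sub_mem (W.parV _ _ (W.parV _ _ hv)) (W.parV _ _ (W.parV _ _ hv))) (W.parV _ _ hv)

lemma curv_J (h : P.IsScale ξ₀) (a b : P.X) {v : P.X} (hv : v ∈ P.V) :
    W.conn.curv a b (W.J v) = W.J (W.conn.curv a b v) := by
  simp only [Conn.curv, W.cov_J h _ hv, W.cov_J h _ (W.parV _ _ hv), W.J_sub]

lemma lie_scale (h : P.IsScale ξ₀) {v : P.X} (hv : v ∈ P.V) :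
    P.lie ξ₀ v = W.conn.cov ξ₀ v + W.J v := by
  rw [W.conn.lie_eq, W.parScale, W.torsion_scale h hv]; abel

lemma q_torsion_HJ {a : P.X} (ha : a ∈ P.H) (v : P.X) :
    P.q (W.conn.torsion a (W.J v)) = 0 := P.q_eq_zero.2 (W.torsHQ a ha _)

lemma q_torsion_JH {a : P.X} (ha : a ∈ P.H) (v : P.X) :
    P.q (W.conn.torsion (W.J v) a) = 0 := by
  rw [W.conn.torsion_skew, map_neg, W.q_torsion_HJ ha, neg_zero]

/-- The Bianchi identity on `E × V × V`. -/
lemma bianchi_EVV (h : P.IsScale ξ₀) {a b : P.X} (ha : a ∈ P.V) (hb : b ∈ P.V) :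
    W.conn.curv ξ₀ a b - W.conn.curv ξ₀ b a
      = W.conn.cov ξ₀ (W.conn.torsion a b)
        - W.conn.torsion (W.conn.cov ξ₀ a) b + W.conn.torsion (W.conn.cov ξ₀ b) a
        + W.conn.torsion b (W.J a) - W.conn.torsion a (W.J b)
        + W.J (W.conn.torsion a b) := by
  have key := W.conn.bianchi ξ₀ a b
  have hl : P.lie a b ∈ P.V := P.involutive _ ha _ hb
  have hJ : W.J (W.conn.torsion a b)
      = W.J (W.conn.cov a b) - W.J (W.conn.cov b a) - W.J (P.lie a b) := by
    rw [Conn.torsion, J_sub, J_sub]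
  rw [W.curv_scale, W.conn.curv_skew ξ₀ b a, W.conn.torsion_skew b ξ₀, W.torsion_scale h ha,
    W.torsion_scale h hb, P.lie_skew ξ₀ b, W.conn.torsion_neg_left, W.lie_scale h ha,
    W.lie_scale h hb, W.conn.torsion_add_left, W.conn.torsion_add_left,
    W.conn.torsion_skew (P.lie a b) ξ₀, W.torsion_scale h hl, W.conn.neg_right, W.conn.neg_right,
    W.conn.neg_right, W.cov_J h _ ha, W.cov_J h _ hb, W.conn.torsion_skew (W.J a) b,
    W.conn.torsion_skew (W.J b) a] at key
  rw [hJ, ← sub_eq_zero, ← sub_eq_zero.mpr key]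
  abel

/-- Modulo `H`, the only term of the Bianchi identity on `E × V × V` that survives is
`J τ(a,b)`, and `J` is injective on `V`. -/
lemma torsion_VV (h : P.IsScale ξ₀) {a b : P.X} (ha : a ∈ P.V) (hb : b ∈ P.V) :
    W.conn.torsion a b = 0 := by
  have hV : ∀ {x : P.X}, x ∈ P.V → P.q x = 0 := fun hx => P.q_eq_zero.2 (P.V_le_H hx)
  have key := congrArg P.q (W.bianchi_EVV h ha hb)
  simp only [map_add, map_sub, W.q_J] at key
  rw [hV (W.curv_mem_V _ _ hb), hV (W.curv_mem_V _ _ ha),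
    hV (W.parV _ _ (W.torsion_VV_mem ha hb)),
    hV (W.torsion_VV_mem (W.parV _ _ ha) hb), hV (W.torsion_VV_mem (W.parV _ _ hb) ha),
    W.q_torsion_HJ (P.V_le_H ha), W.q_torsion_HJ (P.V_le_H hb)] at key
  exact h.levi_injective (W.torsion_VV_mem ha hb) (by simpa using key.symm)

/-- The `Q`-component of the Bianchi identity on `E × V × ι(Q)`. Here `f` is the
`ξ₀`-coefficient of `τ(ξ₀, J b) ∈ H`. -/
lemma bianchi_EVQ (h : P.IsScale ξ₀) {a b : P.X} (ha : a ∈ P.V) (hb : b ∈ P.V)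
    {f : P.C} {r : P.X} (hr : r ∈ P.V) (hf : W.conn.torsion ξ₀ (W.J b) = f • ξ₀ + r) :
    P.levi ξ₀ (W.conn.curv ξ₀ a b)
      = -P.q (W.conn.torsion (W.J a) (W.J b)) + P.levi ξ₀ (W.conn.torsion a (W.J b))
        + f • P.levi ξ₀ a := by
  have hξ : ξ₀ ∈ P.H := P.E_le_H h.mem
  have haH := P.V_le_H ha
  obtain ⟨g, B, hB, hg⟩ := h.mem_H (W.torsHQ a haH (P.levi ξ₀ b))
  change W.conn.torsion a (W.J b) = _ at hg
  have hξξ : W.conn.torsion ξ₀ ξ₀ = 0 := by simp [Conn.torsion, W.parScale, P.lie_self]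
  -- The two brackets with `J b`, paired with the remaining argument, modulo `H`.
  have h1 : P.q (W.conn.torsion (P.lie a (W.J b)) ξ₀)
      = -P.levi ξ₀ (W.conn.cov (W.J b) a) - P.levi ξ₀ B := by
    rw [W.conn.lie_eq, hg, W.cov_J h _ hb, W.conn.torsion_sub_left, W.conn.torsion_sub_left,
      W.conn.torsion_add_left, W.conn.torsion_smul_left, hξξ,
      W.conn.torsion_skew (W.conn.cov (W.J b) a), W.torsion_scale h (W.parV _ _ ha),
      W.conn.torsion_skew B, W.torsion_scale h hB]
    simp only [map_sub, map_add, map_neg, W.q_J, W.q_torsion_JH hξ, smul_zero, map_zero]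
    abel
  have h2 : P.q (W.conn.torsion (P.lie (W.J b) ξ₀) a) = -(f • P.levi ξ₀ a) := by
    rw [W.conn.lie_eq, W.parScale, W.conn.torsion_skew (W.J b) ξ₀, hf, W.cov_J h _ hb,
      W.conn.torsion_sub_left, W.conn.torsion_sub_left, W.conn.torsion_neg_left,
      W.conn.torsion_add_left, W.conn.torsion_smul_left, W.torsion_VV h hr ha,
      W.torsion_scale h ha]
    have h0 : W.conn.torsion 0 a = 0 := (W.conn.torsionLeft a).map_zero
    simp [h0, W.q_J, W.q_torsion_JH haH]
  have h3 : P.q (W.conn.torsion (P.lie ξ₀ a) (W.J b))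
      = P.q (W.conn.torsion (W.J a) (W.J b)) := by
    rw [W.lie_scale h ha, W.conn.torsion_add_left, map_add,
      W.q_torsion_HJ (P.V_le_H (W.parV _ _ ha)), zero_add]
  have key := congrArg P.q (W.conn.bianchi ξ₀ a (W.J b))
  have hτ' : W.conn.torsion a (W.J b) ∈ P.H := W.torsHQ a haH _
  have hτ : W.conn.torsion (W.J b) ξ₀ ∈ P.H := P.q_eq_zero.1 (W.q_torsion_JH hξ b)
  simp only [map_add, map_sub] at key
  rw [W.curv_J h _ _ hb, W.q_J, W.curv_scale, h1, h2, h3,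
    P.q_eq_zero.2 (P.V_le_H (W.curv_mem_V _ _ ha)),
    P.q_eq_zero.2 (W.cov_mem_H ξ₀ hτ'),
    P.q_eq_zero.2 (W.cov_mem_H a hτ), W.torsion_scale h ha, W.conn.neg_right,
    W.cov_J h _ ha, map_neg, W.q_J, map_zero, add_zero, add_zero] at key
  rw [key, hg, P.levi_add_right, P.levi_smul_right _ _ hξ, P.levi_self]
  simp only [smul_zero]
  abel

/-- The normalization condition says `2 τ(a, J b) ≡ f b` modulo `E`, where `f` is the
`ξ₀`-coefficient of `τ(ξ₀, J a)`. -/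
lemma norm_coeff (h : P.IsScale ξ₀) {a b : P.X} (ha : a ∈ P.V) (hb : b ∈ P.V)
    {f : P.C} {r : P.X} (hr : r ∈ P.V) (hf : W.conn.torsion ξ₀ (W.J a) = f • ξ₀ + r) :
    f • P.levi ξ₀ b = P.levi ξ₀ (W.conn.torsion a (W.J b))
      + P.levi ξ₀ (W.conn.torsion a (W.J b)) := by
  have hn := W.norm a ha b hb
  change P.levi (W.conn.torsion ξ₀ (W.J a)) b
    = (2 : P.C) • P.levi ξ₀ (W.conn.torsion a (W.J b)) at hn
  rw [hf, P.levi_add_left, P.levi_VV hr hb, add_zero,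
    P.levi_smul_left _ (P.E_le_H h.mem), two_smul] at hn
  exact hn

/-- Antisymmetrizing the identity on `E × V × ι(Q)` and comparing with the one on
`E × V × V`, the normalization cancels everything but `2 q(τ(J a, J b))`. -/
lemma q_torsion_JJ (h : P.IsScale ξ₀) {a b : P.X} (ha : a ∈ P.V) (hb : b ∈ P.V) :
    P.q (W.conn.torsion (W.J a) (W.J b)) = 0 := by
  have hξ : ξ₀ ∈ P.H := P.E_le_H h.mem
  obtain ⟨f, r, hr, hf⟩ := h.mem_H (W.torsHQ ξ₀ hξ (P.levi ξ₀ a))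
  obtain ⟨g, s, hs, hg⟩ := h.mem_H (W.torsHQ ξ₀ hξ (P.levi ξ₀ b))
  have e1 := W.bianchi_EVQ h ha hb hs hg
  have e2 := W.bianchi_EVQ h hb ha hr hf
  rw [W.norm_coeff h hb ha hs hg] at e1
  rw [W.norm_coeff h ha hb hr hf, W.conn.torsion_skew (W.J b) (W.J a), map_neg] at e2
  have e3 := congrArg (P.levi ξ₀) (W.bianchi_EVV h ha hb)
  rw [W.torsion_VV h ha hb, W.torsion_VV h (W.parV _ _ ha) hb,
    W.torsion_VV h (W.parV _ _ hb) ha, W.conn.zero_right] at e3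
  have hJ0 : W.J 0 = 0 := by simpa using W.J_sub 0 0
  rw [hJ0, sub_zero, zero_add, zero_add, add_zero, P.levi_sub_right, P.levi_sub_right,
    e1, e2] at e3
  refine P.eq_zero_of_add_self ?_
  rw [← neg_eq_zero, ← sub_eq_zero.mpr e3]
  abel

end WeylStructure

/-- part of Theorem 2.7 of the paper.  Let `(M,E,V)` be a path
geometry, `ξ₀ ∈ Γ(E)` a nowhere vanishing section, `(∇,Π)` the Weyl structure
associated to `ξ₀` and `τ` the torsion of `∇`.  Then `τ(V,V) = 0` and
`τ(TM, ι(Q)) ⊂ H`. -/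
theorem torsion_VV_eq_zero_and_torsion_TQ_subset_H (P : PathGeometry) (ξ₀ : P.X)
    (hξ₀ : P.IsScale ξ₀) (W : WeylStructure P ξ₀) :
    (∀ η₁ ∈ P.V, ∀ η₂ ∈ P.V, W.conn.torsion η₁ η₂ = 0) ∧
      ∀ (ψ : P.X) (w : P.Q), W.conn.torsion ψ (W.ι w) ∈ P.H := by
  refine ⟨fun a ha b hb => W.torsion_VV hξ₀ ha hb, fun ψ w => ?_⟩
  have hψ : ψ - W.ι (P.q ψ) ∈ P.H := by
    rw [← P.q_eq_zero, map_sub, W.q_ι, sub_self]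
  obtain ⟨a, ha, hw⟩ := hξ₀.levi_surjective (P.q ψ)
  obtain ⟨b, hb, rfl⟩ := hξ₀.levi_surjective w
  rw [← hw] at hψ
  rw [← sub_add_cancel ψ (W.ι (P.levi ξ₀ a)), W.conn.torsion_add_left]
  exact add_mem (W.torsHQ _ hψ _) (P.q_eq_zero.1 (W.q_torsion_JJ hξ₀ ha hb))
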